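/- For a fixed n ≥ 1, a fixed CNF formula φ over n variables, and a fixed ε ∈ (0, 1], the number of Boolean functions f on n variables with f⁻¹(1) nonempty such that φ⁻¹(1) ⊆ f⁻¹(1) and Pr_{x uniform in f⁻¹(1)}[φ(x) = 1] ≥ ε is at most 2^{2^n} · 2^{−ε·2^{n−4}}. -/

import Mathlib

/-!
Write `N = 2 ^ n` and let `s` be the number of satisfying assignments of `φ`. A function `f` as in
the statement is determined by its values on the `N - s` falsifying assignments, so there are at
most `2 ^ (N - s)` of them (`card_forced_true_le`); this suffices when `s ≥ ε N / 16`.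

Otherwise, since `φ⁻¹(1) ⊆ f⁻¹(1)`, the advantage is `s / |f⁻¹(1)|`, whence
`|f⁻¹(1)| ≤ s / ε < N / 16`. Giving each `f` the weight `(1/2) ^ |f⁻¹(1)|`, whose sum over all `f`
is `(3/2) ^ N`, there are at most `(3/2) ^ N * 2 ^ (N / 16)` such functions
(`card_few_ones_le`), and `(3/2) ^ 8 ≤ 2 ^ 7` brings this below `2 ^ (N - N / 16)`.
-/


/-- A literal over `n` variables: a coordinate `x_i` (if `neg = false`)
or its negation `¬ x_i` (if `neg = true`). -/
structure Lit (n : ℕ) where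
  idx : Fin n
  neg : Bool
deriving DecidableEq

/-- Evaluation of a literal at an assignment. -/
def Lit.eval {n : ℕ} (l : Lit n) (x : Fin n → Bool) : Bool :=
  if l.neg then !(x l.idx) else x l.idx

/-- A clause: a finite set of literals, evaluated as their disjunction. -/
abbrev Clause (n : ℕ) := Finset (Lit n)

/-- A CNF formula: a finite set of clauses, evaluated as their conjunction.
Its size is its number of clauses (`Finset.card`). -/
abbrev CNF (n : ℕ) := Finset (Clause n)

/-- `φ.sat x` means the CNF formula `φ` evaluates to `1` at `x`. -/
def CNF.sat {n : ℕ} (φ : CNF n) (x : Fin n → Bool) : Prop :=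
  ∀ c ∈ φ, ∃ l ∈ c, l.eval x = true

instance {n : ℕ} (φ : CNF n) (x : Fin n → Bool) : Decidable (φ.sat x) :=
  inferInstanceAs (Decidable (∀ c ∈ φ, ∃ l ∈ c, Lit.eval l x = true))

/-- `φ⁻¹(1) ⊆ f⁻¹(1)`: the formula does not err on inputs where `f` is `0`. -/
def CNF.onesided {n : ℕ} (φ : CNF n) (f : (Fin n → Bool) → Bool) : Prop :=
  ∀ x, φ.sat x → f x = true

/-- A CNF formula is monotone if none of its literals is negated. -/
def CNF.mono {n : ℕ} (φ : CNF n) : Prop :=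
  ∀ c ∈ φ, ∀ l ∈ c, l.neg = false

/-- A distribution on `f⁻¹(1)`: nonnegative, supported on `f⁻¹(1)`, summing to 1. -/
def IsDistOn {n : ℕ} (μ : (Fin n → Bool) → ℝ) (f : (Fin n → Bool) → Bool) : Prop :=
  (∀ x, 0 ≤ μ x) ∧ (∀ x, f x = false → μ x = 0) ∧ (∑ x, μ x) = 1

/-- `Pr_{x ∼ μ}[φ(x) = 1]`. -/
noncomputable def CNF.pr {n : ℕ} (φ : CNF n) (μ : (Fin n → Bool) → ℝ) : ℝ :=
  ∑ x, if φ.sat x then μ x else 0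

/-- `D_μ(f)`: the maximum, over CNF formulas `φ` with `φ⁻¹(1) ⊆ f⁻¹(1)` and `|φ| ≥ 1`,
of `Pr_{x∼μ}[φ(x)=1] / |φ|` (0 if there is no such formula). -/
noncomputable def Dmu {n : ℕ} (f : (Fin n → Bool) → Bool) (μ : (Fin n → Bool) → ℝ) : ℝ :=
  sSup {r : ℝ | ∃ φ : CNF n, φ.onesided f ∧ 1 ≤ φ.card ∧ r = φ.pr μ / φ.card}

/-- `D(f)`: the minimum of `D_μ(f)` over distributions `μ` on `f⁻¹(1)`. -/
noncomputable def Dof {n : ℕ} (f : (Fin n → Bool) → Bool) : ℝ :=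
  sInf {r : ℝ | ∃ μ, IsDistOn μ f ∧ r = Dmu f μ}

/-- The monotone variant `D⁺_μ(f)`, restricted to monotone CNF formulas. -/
noncomputable def DmuPlus {n : ℕ} (f : (Fin n → Bool) → Bool) (μ : (Fin n → Bool) → ℝ) : ℝ :=
  sSup {r : ℝ | ∃ φ : CNF n, φ.mono ∧ φ.onesided f ∧ 1 ≤ φ.card ∧ r = φ.pr μ / φ.card}

/-- `D⁺(f)`: the minimum of `D⁺_μ(f)` over distributions `μ` on `f⁻¹(1)`. -/
noncomputable def DPlus {n : ℕ} (f : (Fin n → Bool) → Bool) : ℝ :=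
  sInf {r : ℝ | ∃ μ, IsDistOn μ f ∧ r = DmuPlus f μ}

/-- A list of CNF formulas computes `f` as their pointwise disjunction. -/
def ComputedByOr {n : ℕ} (L : List (CNF n)) (f : (Fin n → Bool) → Bool) : Prop :=
  ∀ x, f x = true ↔ ∃ φ ∈ L, φ.sat x

/-- `L₃(f)`: the minimum size (total number of clauses) of a depth-3 formula computing `f`. -/
noncomputable def L3 {n : ℕ} (f : (Fin n → Bool) → Bool) : ℕ :=
  sInf {s : ℕ | ∃ L : List (CNF n), ComputedByOr L f ∧ s = (L.map Finset.card).sum}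

/-- `L₃⁺(f)`: the minimum size of a depth-3 monotone formula computing `f`. -/
noncomputable def L3Plus {n : ℕ} (f : (Fin n → Bool) → Bool) : ℕ :=
  sInf {s : ℕ | ∃ L : List (CNF n), (∀ φ ∈ L, φ.mono) ∧ ComputedByOr L f ∧
    s = (L.map Finset.card).sum}

/-- The number of ones in a Boolean input. -/
def ones {n : ℕ} (x : Fin n → Bool) : ℕ := (Finset.univ.filter fun i => x i = true).card

/-- The parity function: `1` iff the number of ones is odd. -/
def parityF (n : ℕ) : (Fin n → Bool) → Bool := fun x => decide (ones x % 2 = 1)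

/-- The majority function: `1` iff the number of ones is at least `n/2`. -/
def majF (n : ℕ) : (Fin n → Bool) → Bool := fun x => decide (n ≤ 2 * ones x)

/-- `Pr_{x uniform in f⁻¹(1)}[φ(x) = 1]`. -/
noncomputable def prUnif {n : ℕ} (f : (Fin n → Bool) → Bool) (φ : CNF n) : ℝ :=
  ((Finset.univ.filter fun x => f x = true ∧ φ.sat x).card : ℝ) /
    ((Finset.univ.filter fun x => f x = true).card : ℝ)

/-- `x` is an isolated solution of `φ`: `φ(x)=1` and `φ(y)=0` for every `y`
differing from `x` in exactly one coordinate. -/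
def IsIsolated {n : ℕ} (φ : CNF n) (x : Fin n → Bool) : Prop :=
  φ.sat x ∧ ∀ y : Fin n → Bool, hammingDist x y = 1 → ¬ φ.sat y

/-- Functions forced to be `true` on `P` are determined by their restriction to the complement. -/
lemma card_forced_true_le {α : Type*} [Fintype α] (P : α → Prop) [DecidablePred P] :
    Nat.card {f : α → Bool // ∀ x, P x → f x = true} ≤
      2 ^ (Finset.univ.filter fun x => ¬ P x).card := by
  have h := Nat.card_le_card_of_injective
    (fun (f : {f : α → Bool // ∀ x, P x → f x = true}) (x : {x // ¬ P x}) => f.1 x.1) (by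
      intro f g hfg
      ext x
      by_cases hx : P x
      · rw [f.2 x hx, g.2 x hx]
      · exact congrFun hfg ⟨x, hx⟩)
  classical
  rw [Nat.card_eq_fintype_card (α := {x // ¬ P x} → Bool), Fintype.card_fun, Fintype.card_bool,
    Fintype.card_subtype] at h
  exact h

lemma sum_half_pow_ones (α : Type*) [Fintype α] [DecidableEq α] :
    ∑ f : α → Bool, (1 / 2 : ℝ) ^ (Finset.univ.filter fun x => f x = true).card =
      (3 / 2 : ℝ) ^ Fintype.card α := by
  have h := Fintype.prod_sum (fun (_ : α) (b : Bool) => if b = true then (1 / 2 : ℝ) else 1)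
  rw [← Finset.card_univ, ← Finset.prod_const]
  have h3 : ∑ b : Bool, (if b = true then (1 / 2 : ℝ) else 1) = 3 / 2 := by
    norm_num [Fintype.sum_bool]
  rw [h3] at h
  rw [h]
  refine Finset.sum_congr rfl fun f _ => ?_
  rw [Finset.prod_ite, Finset.prod_const, Finset.prod_const_one, mul_one]

/-- An exponential-moment (Chernoff) bound on the number of functions with at most `t` ones. -/
lemma card_few_ones_le (α : Type*) [Fintype α] [DecidableEq α] (t : ℝ) :
    (Nat.card {f : α → Bool // ((Finset.univ.filter fun x => f x = true).card : ℝ) ≤ t} : ℝ) ≤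
      (3 / 2 : ℝ) ^ Fintype.card α * (2 : ℝ) ^ t := by
  classical
  rw [Nat.card_eq_fintype_card, Fintype.card_subtype, ← sum_half_pow_ones, Finset.sum_mul,
    Finset.card_eq_sum_ones, Nat.cast_sum, Finset.sum_filter]
  refine Finset.sum_le_sum fun f _ => ?_
  split_ifs with hf
  · have h2 : (1 / 2 : ℝ) ^ (Finset.univ.filter fun x => f x = true).card =
        (2 : ℝ) ^ (-((Finset.univ.filter fun x => f x = true).card : ℝ)) := by
      rw [Real.rpow_neg (by norm_num), Real.rpow_natCast, one_div, inv_pow]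
    rw [h2, ← Real.rpow_add (by norm_num), Nat.cast_one]
    exact Real.one_le_rpow (by norm_num) (by linarith)
  · positivity

lemma three_halves_pow_le (N : ℕ) : (3 / 2 : ℝ) ^ N ≤ (2 : ℝ) ^ ((7 / 8 : ℝ) * N) := by
  rw [Real.rpow_mul (by norm_num), Real.rpow_natCast]
  refine pow_le_pow_left₀ (by norm_num) ?_ N
  refine le_of_pow_le_pow_left₀ (n := 8) (by norm_num) (by positivity) ?_
  rw [← Real.rpow_natCast ((2 : ℝ) ^ (7 / 8 : ℝ)) 8, ← Real.rpow_mul (by norm_num)]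
  norm_num

/-- for a fixed CNF `φ` and advantage `ε`, few functions are
one-sided-approximated by `φ` with advantage `ε`. -/
theorem stmt11 (n : ℕ) (hn : 1 ≤ n) (φ : CNF n) (ε : ℝ) (hε0 : 0 < ε) (hε1 : ε ≤ 1) :
    (Nat.card {f : (Fin n → Bool) → Bool //
        (∃ x, f x = true) ∧ φ.onesided f ∧ ε ≤ prUnif f φ} : ℝ) ≤
      (2 : ℝ) ^ (2 ^ n : ℕ) * (2 : ℝ) ^ (-(ε * (2 : ℝ) ^ ((n : ℝ) - 4))) := by
  set s := (Finset.univ.filter fun x => φ.sat x).card with hs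
  have hcard : Fintype.card (Fin n → Bool) = 2 ^ n := by simp
  have hsplit : s + (Finset.univ.filter fun x => ¬ φ.sat x).card = 2 ^ n := by
    rw [hs, Finset.card_filter_add_card_filter_not, Finset.card_univ, hcard]
  obtain ⟨N, hN⟩ : ∃ N : ℕ, N = 2 ^ n := ⟨_, rfl⟩
  have hexp : (2 : ℝ) ^ ((n : ℝ) - 4) = N / 16 := by
    rw [Real.rpow_sub (by norm_num), Real.rpow_natCast, hN]
    norm_num
  rw [hexp, ← hN, ← Real.rpow_natCast, ← Real.rpow_add (by norm_num)]
  rw [← hN] at hsplit hcard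
  have hN0 : (0 : ℝ) ≤ N := Nat.cast_nonneg N
  rcases le_or_gt (ε * (N / 16)) s with hbig | hsmall
  · calc _ ≤ ((Nat.card {f : (Fin n → Bool) → Bool // ∀ x, φ.sat x → f x = true} : ℕ) : ℝ) := by
          exact_mod_cast Nat.card_le_card_of_injective _
            (Subtype.map_injective (f := id)
              (p := fun f => (∃ x, f x = true) ∧ φ.onesided f ∧ ε ≤ prUnif f φ)
              (fun f hf => hf.2.1) Function.injective_id)
      _ ≤ ((2 ^ (Finset.univ.filter fun x => ¬ φ.sat x).card : ℕ) : ℝ) := by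
          exact_mod_cast card_forced_true_le _
      _ ≤ _ := by
          rw [Nat.cast_pow, Nat.cast_two, ← Real.rpow_natCast]
          refine Real.rpow_le_rpow_of_exponent_le (by norm_num) ?_
          have : (s : ℝ) + ((Finset.univ.filter fun x => ¬ φ.sat x).card : ℝ) = N := by
            exact_mod_cast hsplit
          linarith
  · have hfew : ∀ f : (Fin n → Bool) → Bool,
        (∃ x, f x = true) ∧ φ.onesided f ∧ ε ≤ prUnif f φ →
        ((Finset.univ.filter fun x => f x = true).card : ℝ) ≤ N / 16 := by
      rintro f ⟨⟨x, hx⟩, hone, hpr⟩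
      have hpos : (0 : ℝ) < ((Finset.univ.filter fun x => f x = true).card : ℝ) := by
        exact_mod_cast Finset.card_pos.mpr ⟨x, by simpa using hx⟩
      have hsat : (Finset.univ.filter fun x => f x = true ∧ φ.sat x).card = s := by
        rw [hs]
        congr 1
        ext y
        simpa using hone y
      rw [prUnif, hsat, le_div_iff₀ hpos] at hpr
      exact le_of_mul_le_mul_left (hpr.trans hsmall.le) hε0
    calc _ ≤ ((Nat.card {f : (Fin n → Bool) → Bool //
            ((Finset.univ.filter fun x => f x = true).card : ℝ) ≤ N / 16} : ℕ) : ℝ) := by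
          exact_mod_cast Nat.card_le_card_of_injective _
            (Subtype.map_injective (f := id) hfew Function.injective_id)
      _ ≤ (3 / 2 : ℝ) ^ N * (2 : ℝ) ^ ((N : ℝ) / 16) := by
          have := card_few_ones_le (Fin n → Bool) (N / 16)
          rwa [hcard] at this
      _ ≤ (2 : ℝ) ^ ((7 / 8 : ℝ) * N) * (2 : ℝ) ^ ((N : ℝ) / 16) := by
          gcongr
          exact three_halves_pow_le N
      _ ≤ _ := by
          rw [← Real.rpow_add (by norm_num)]
          refine Real.rpow_le_rpow_of_exponent_le (by norm_num) ?_
          nlinarith
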